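/- arXiv:1911.07357 — 3 statements merged into one kernel-verified Lean document; each statement's English description precedes it below -/
import Mathlib

section
/- For any distribution p on {-1,1}^n and any σ ∈ [0,1], one has d_TV(p, U) ≤ E_{S∼S_σ}[d_TV(p_{S̄}, U)] + E_{ρ∼D_σ(p)}[d_TV(p_{|ρ}, U)], where in each term U denotes the uniform distribution on the cube of the appropriate dimension (every restriction ρ arising with positive probability under D_σ(p) has a well-defined restricted distribution p_{|ρ}). -/
/-!
The inequality already holds for each fixed star set `S`; averaging over `S` then uses only that
the weights `σ ^ |S| * (1 - σ) ^ (n - |S|)` are nonnegative and sum to `1`.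

For fixed `S`, view the cube as a product `Z × U` of the coordinates in `S` and those outside `S`
(`splitCube`). Let `m` be the marginal of `p` on `U`, i.e. the projection. By the triangle
inequality, the distance from `p` to uniform is at most the distance from `p` to `m × uniform`
plus the distance from `m × uniform` to uniform (`dTVU_prod_le`). The latter is the distance of `m`
to uniform; the former is the `m`-average over `u` of the distance to uniform of `p` conditioned
on `u`, which is the expected distance for the random restriction.
-/


open scoped Classical

noncomputable section

namespace Subcube

/-- The ±1 value of a Boolean coordinate. -/
def sgn (b : Bool) : ℝ := if b then 1 else -1

/-- Flip coordinate `i` of `x`. -/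
def flipAt {ι : Type*} [DecidableEq ι] (i : ι) (x : ι → Bool) : ι → Bool :=
  Function.update x i (!(x i))

/-- `p` is a probability mass function. -/
def IsDist {α : Type*} [Fintype α] (p : α → ℝ) : Prop :=
  (∀ a, 0 ≤ p a) ∧ ∑ a, p a = 1

/-- Total variation distance to the uniform distribution. -/
def dTVU {α : Type*} [Fintype α] (p : α → ℝ) : ℝ :=
  (1/2) * ∑ a, |p a - 1 / (Fintype.card α : ℝ)|

/-- Probability mass of the event that a sample from `p` agrees with `y` outside `S`. -/
def offMass {n : ℕ} (p : (Fin n → Bool) → ℝ) (S : Finset (Fin n)) (y : Fin n → Bool) : ℝ :=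
  ∑ x : Fin n → Bool, if ∀ j ∉ S, x j = y j then p x else 0

/-- Projection of `p` to the coordinates outside `S`. -/
def projDist {n : ℕ} (p : (Fin n → Bool) → ℝ) (S : Finset (Fin n)) :
    ({i : Fin n // i ∉ S} → Bool) → ℝ :=
  fun u => ∑ x : Fin n → Bool, if ∀ i : {i : Fin n // i ∉ S}, x i.1 = u i then p x else 0

/-- Restriction of `p` with star set `S` and non-star coordinates set according to `y`. -/
def restrictDist {n : ℕ} (p : (Fin n → Bool) → ℝ) (S : Finset (Fin n)) (y : Fin n → Bool) :
    ({i : Fin n // i ∈ S} → Bool) → ℝ :=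
  fun z =>
    (∑ x : Fin n → Bool,
      if (∀ i : {i : Fin n // i ∈ S}, x i.1 = z i) ∧ (∀ j ∉ S, x j = y j) then p x else 0)
      / offMass p S y

/-- Mean of coordinate `i` of `p` conditioned on agreeing with `y` outside `S`
(the coordinate `i` of the mean vector of the restriction with star set `S`, for `i ∈ S`). -/
def condMean {n : ℕ} (p : (Fin n → Bool) → ℝ) (S : Finset (Fin n)) (y : Fin n → Bool)
    (i : Fin n) : ℝ :=
  (∑ x : Fin n → Bool, if ∀ j ∉ S, x j = y j then p x * sgn (x i) else 0) / offMass p S y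

/-- Mean vector of a distribution on a Boolean cube. -/
def meanVec {ι : Type*} [Fintype ι] (p : (ι → Bool) → ℝ) : ι → ℝ :=
  fun i => ∑ x : ι → Bool, p x * sgn (x i)

/-- Squared Euclidean norm. -/
def normSq {ι : Type*} [Fintype ι] (v : ι → ℝ) : ℝ := ∑ i, v i ^ 2

/-- Euclidean norm. -/
def l2norm {ι : Type*} [Fintype ι] (v : ι → ℝ) : ℝ := Real.sqrt (normSq v)

/-- The triangle inequality on a product cube `Z × U`: with `m` the marginal on `U`, compare `Q`
to `m × uniform`, and `m × uniform` to the uniform distribution. Where `m u = 0`, `Q` vanishes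
as well, so the junk value of `Q (z, u) / m u` does no harm. -/
lemma dTVU_prod_le {Z U : Type*} [Fintype Z] [Fintype U] [Nonempty Z]
    (Q : Z × U → ℝ) (hQ : ∀ a, 0 ≤ Q a) :
    dTVU Q ≤ dTVU (fun u => ∑ z, Q (z, u)) +
      ∑ a : Z × U, Q a * dTVU (fun z => Q (z, a.2) / ∑ z', Q (z', a.2)) := by
  set m : U → ℝ := fun u => ∑ z, Q (z, u) with hm
  have hN : (0 : ℝ) < Fintype.card Z := by exact_mod_cast Fintype.card_pos
  have h_second : ∑ a : Z × U, Q a * dTVU (fun z => Q (z, a.2) / m a.2) =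
      (1/2) * ∑ u, ∑ z, |Q (z, u) - m u / Fintype.card Z| := by
    rw [Fintype.sum_prod_type_right, Finset.mul_sum]
    refine Finset.sum_congr rfl fun u _ => ?_
    dsimp only
    rw [← Finset.sum_mul]
    change m u * ((1/2) * _) = _
    rw [mul_left_comm, Finset.mul_sum]
    congr 1
    refine Finset.sum_congr rfl fun z _ => ?_
    have hm0 : 0 ≤ m u := Finset.sum_nonneg fun z _ => hQ _
    rcases hm0.eq_or_lt with h | h
    · have h_zero : Q (z, u) = 0 :=
        (Finset.sum_eq_zero_iff_of_nonneg fun z _ => hQ (z, u)).1 h.symm z (Finset.mem_univ z)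
      simp [← h, h_zero]
    · nth_rewrite 1 [← abs_of_pos h]
      rw [← abs_mul, mul_sub, mul_div_cancel₀ _ h.ne', mul_one_div]
  have h_first : dTVU m =
      (1/2) * ∑ u, ∑ _z : Z, |m u / Fintype.card Z - 1 / Fintype.card (Z × U)| := by
    unfold dTVU
    congr 1
    refine Finset.sum_congr rfl fun u _ => ?_
    rw [Finset.sum_const, Finset.card_univ, nsmul_eq_mul]
    nth_rewrite 1 [← abs_of_pos hN]
    rw [← abs_mul, mul_sub, mul_div_cancel₀ _ hN.ne', Fintype.card_prod]
    congr 2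
    push_cast
    rw [mul_one_div, div_mul_cancel_left₀ hN.ne', one_div]
  rw [h_second, h_first, ← mul_add, ← Finset.sum_add_distrib]
  unfold dTVU
  rw [Fintype.sum_prod_type_right]
  gcongr with u
  rw [← Finset.sum_add_distrib]
  gcongr with z
  rw [add_comm]
  exact abs_sub_le _ _ _

/-- Total variation distance to uniform is invariant under relabelling of the sample space. -/
lemma dTVU_comp_equiv {α β : Type*} [Fintype α] [Fintype β] (e : α ≃ β) (p : α → ℝ) :
    dTVU (fun b => p (e.symm b)) = dTVU p := by
  unfold dTVU
  rw [Fintype.card_congr e]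
  congr 1
  exact Equiv.sum_comp e.symm (fun a => |p a - 1 / (Fintype.card β : ℝ)|)

/-- Splitting of the cube into its coordinates in `S` and those outside `S`. -/
def splitCube {n : ℕ} (S : Finset (Fin n)) :
    (Fin n → Bool) ≃ ({i : Fin n // i ∈ S} → Bool) × ({i : Fin n // i ∉ S} → Bool) :=
  Equiv.piEquivPiSubtypeProd (fun i => i ∈ S) (fun _ => Bool)

lemma splitCube_fst {n : ℕ} (S : Finset (Fin n)) (x : Fin n → Bool)
    (z : {i : Fin n // i ∈ S} → Bool) :
    (∀ i : {i : Fin n // i ∈ S}, x i.1 = z i) ↔ (splitCube S x).1 = z :=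
  funext_iff.symm

lemma splitCube_snd {n : ℕ} (S : Finset (Fin n)) (x : Fin n → Bool)
    (u : {i : Fin n // i ∉ S} → Bool) :
    (∀ i : {i : Fin n // i ∉ S}, x i.1 = u i) ↔ (splitCube S x).2 = u :=
  funext_iff.symm

lemma splitCube_snd_eq {n : ℕ} (S : Finset (Fin n)) (x y : Fin n → Bool) :
    (∀ j ∉ S, x j = y j) ↔ (splitCube S x).2 = (splitCube S y).2 := by
  rw [← splitCube_snd]
  exact ⟨fun h i => h i.1 i.2, fun h j hj => h ⟨j, hj⟩⟩

lemma sum_ite_snd {n : ℕ} (p : (Fin n → Bool) → ℝ) (S : Finset (Fin n))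
    (u : {i : Fin n // i ∉ S} → Bool) :
    (∑ x, if (splitCube S x).2 = u then p x else 0) = ∑ z, p ((splitCube S).symm (z, u)) := by
  rw [← Equiv.sum_comp (splitCube S).symm, Fintype.sum_prod_type]
  simp

lemma projDist_eq {n : ℕ} (p : (Fin n → Bool) → ℝ) (S : Finset (Fin n)) :
    projDist p S = fun u => ∑ z, p ((splitCube S).symm (z, u)) := by
  funext u
  simp only [projDist, splitCube_snd, sum_ite_snd]

lemma restrictDist_eq {n : ℕ} (p : (Fin n → Bool) → ℝ) (S : Finset (Fin n))
    (y : Fin n → Bool) :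
    restrictDist p S y = fun z => p ((splitCube S).symm (z, (splitCube S y).2)) /
      ∑ z', p ((splitCube S).symm (z', (splitCube S y).2)) := by
  funext z
  simp only [restrictDist, offMass, splitCube_fst, splitCube_snd_eq, sum_ite_snd]
  congr 1
  rw [← Equiv.sum_comp (splitCube S).symm]
  simp only [Equiv.apply_symm_apply, ← Prod.ext_iff (y := (z, (splitCube S y).2))]
  simp

/-- The inequality holds for every fixed star set `S`, before averaging. -/
lemma dTVU_le_of_split {n : ℕ} (p : (Fin n → Bool) → ℝ) (hp : ∀ a, 0 ≤ p a)
    (S : Finset (Fin n)) :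
    dTVU p ≤ dTVU (projDist p S) + ∑ x, p x * dTVU (restrictDist p S x) := by
  have h := dTVU_prod_le (fun b => p ((splitCube S).symm b)) fun _ => hp _
  rw [dTVU_comp_equiv] at h
  rw [← Equiv.sum_comp (splitCube S).symm]
  simpa only [projDist_eq, restrictDist_eq, Equiv.apply_symm_apply] using h

/-- For any distribution `p` on `{-1,1}^n` and `σ ∈ [0,1]`,
`d_TV(p,U) ≤ E_{S∼S_σ}[d_TV(p_{S̄},U)] + E_{ρ∼D_σ(p)}[d_TV(p_{|ρ},U)]`. -/
theorem stmt0 (n : ℕ) (σ : ℝ) (hσ0 : 0 ≤ σ) (hσ1 : σ ≤ 1)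
    (p : (Fin n → Bool) → ℝ) (hp : IsDist p) :
    dTVU p ≤
      (∑ S : Finset (Fin n), σ ^ S.card * (1 - σ) ^ (n - S.card) * dTVU (projDist p S)) +
      (∑ S : Finset (Fin n), σ ^ S.card * (1 - σ) ^ (n - S.card) *
        ∑ x : Fin n → Bool, p x * dTVU (restrictDist p S x)) := by
  have h_weight : ∑ S : Finset (Fin n), σ ^ S.card * (1 - σ) ^ (n - S.card) = 1 := by
    have h := Fintype.sum_pow_mul_eq_add_pow (Fin n) σ (1 - σ)
    simpa using h
  have h1 : 0 ≤ 1 - σ := sub_nonneg.2 hσ1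
  rw [← Finset.sum_add_distrib]
  calc dTVU p = ∑ S : Finset (Fin n), σ ^ S.card * (1 - σ) ^ (n - S.card) * dTVU p := by
        rw [← Finset.sum_mul, h_weight, one_mul]
    _ ≤ _ := ?_
  refine Finset.sum_le_sum fun S _ => ?_
  rw [← mul_add]
  exact mul_le_mul_of_nonneg_left (dTVU_le_of_split p hp.1 S) (by positivity)

end Subcube
end
end

section
/- (Pisier's inequality.) There is an absolute constant C > 0 such that for every n ≥ 2 and every function f : {-1,1}^n → ℝ with E_{x uniform}[f(x)] = 0, one has E_{x uniform}[|f(x)|] ≤ C·log n · E_{x,y uniform and independent}[ | ∑_{i=1}^n y_i·x_i·Δ_i f(x) | ]. -/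
/-!
Pisier's argument by interpolation along the noise semigroup `T_ρ`, with constant `exp 2`.

By duality, the `L¹` norm of `T_ρ f` is the pairing of `T_ρ f` with its own sign `g`. This pairing
vanishes at `ρ = 0` because `f` has mean zero, so it suffices to bound its derivative in `ρ`.
Couple `x`, `z` and `y` as follows: `x` and `y` are independent and uniform, and each coordinate of
`z` is copied from `x` with probability `ρ` and from `y` otherwise. Then `z` is `ρ`-correlated with
`x`, and the derivative is `1 / (1 - ρ)` times the expectation of `g z * ∑ i, y i * x i * Δ_i f x`
(`deriv_identity`). Since `|g| ≤ 1` it is at most `1 / (1 - ρ)` times the mean of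
`|∑ i, y i * x i * Δ_i f x|` (`deriv_bound`), and integrating gives the factor `-log (1 - ρ)`
(`noise_bound`).

To return from `T_ρ f` to `f`, note that `T_ρ` is inverted by `T_{1/ρ}`, a signed kernel of `L¹`
norm `ρ^{-n}` (`noise_contract`). At `ρ = 1 - 1/n` the two factors are `log n` and at most `exp 2`.
-/

open scoped Classical

noncomputable section

namespace Subcube

/-! ### The noise kernel and its coupling -/

/-- The kernel of the noise operator `T_ρ` on the cube: the law of a point `z` that is
`ρ`-correlated with `x`. -/
def noiseKer {n : ℕ} (ρ : ℝ) (x z : Fin n → Bool) : ℝ :=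
  ∏ i, (1 + ρ * sgn (x i) * sgn (z i)) / 2

/-- One coordinate of the joint law of `z` and `y` given `x`: the bit `b` of `y` is uniform, and
the bit `c` of `z` is copied from the bit `a` of `x` with probability `ρ`, from `b` otherwise. -/
def mixBit (ρ : ℝ) (a c b : Bool) : ℝ :=
  (1 + ρ * sgn a * sgn c + (1 - ρ) * sgn c * sgn b) / 4

/-- The expression `∑ i, y i * x i * Δ_i f x`. -/
def randGrad {n : ℕ} (f : (Fin n → Bool) → ℝ) (x y : Fin n → Bool) : ℝ :=
  ∑ i : Fin n, sgn (y i) * sgn (x i) * ((f x - f (flipAt i x)) / 2)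

lemma sgn_true : sgn true = 1 := by simp [sgn]

lemma sgn_false : sgn false = -1 := by simp [sgn]

lemma mixBit_nonneg {ρ : ℝ} (h0 : 0 ≤ ρ) (h1 : ρ ≤ 1) (a c b : Bool) : 0 ≤ mixBit ρ a c b := by
  cases a <;> cases b <;> cases c <;> simp [mixBit, sgn] <;> linarith

lemma sum_prod_bool {n : ℕ} (φ : Fin n → Bool → ℝ) :
    ∑ x : Fin n → Bool, ∏ i, φ i (x i) = ∏ i, (φ i true + φ i false) := by
  rw [← Fintype.piFinset_univ, ← Finset.prod_univ_sum]
  simp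

/-- The marginal of `mixBit` on the bit of `y` is uniform. -/
lemma sum_prod_mixBit {n : ℕ} (ρ : ℝ) (x y : Fin n → Bool) :
    ∑ z : Fin n → Bool, ∏ i, mixBit ρ (x i) (z i) (y i) = 1 / 2 ^ n := by
  rw [sum_prod_bool (fun i c => mixBit ρ (x i) c (y i))]
  rw [Finset.prod_congr rfl (g := fun _ => (1 / 2 : ℝ))]
  · simp
  · intro i _
    simp only [mixBit, sgn_true, sgn_false]
    ring

/-- Averaging `y i` over the joint law leaves the `i`-th term of the `ρ`-derivative of the noise
kernel, scaled by `1 - ρ`. -/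
lemma sum_mixBit_mul_sgn {n : ℕ} (ρ : ℝ) (x z : Fin n → Bool) (i : Fin n) :
    ∑ y : Fin n → Bool, (∏ j, mixBit ρ (x j) (z j) (y j)) * sgn (y i) =
      (1 - ρ) * ((∏ j ∈ Finset.univ.erase i, (1 + ρ * sgn (x j) * sgn (z j)) / 2)
        * (sgn (z i) / 2)) := by
  have h : ∀ y : Fin n → Bool, (∏ j, mixBit ρ (x j) (z j) (y j)) * sgn (y i) =
      ∏ j, (mixBit ρ (x j) (z j) (y j) * if j = i then sgn (y j) else 1) := by
    intro y
    rw [Finset.prod_mul_distrib, Finset.prod_ite_eq' Finset.univ i (fun j => sgn (y j))]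
    simp
  simp only [h]
  rw [sum_prod_bool (fun j b => mixBit ρ (x j) (z j) b * if j = i then sgn b else 1),
    ← Finset.prod_erase_mul Finset.univ _ (Finset.mem_univ i)]
  have h2 : ∀ j ∈ Finset.univ.erase i,
      (mixBit ρ (x j) (z j) true * (if j = i then sgn true else 1) +
        mixBit ρ (x j) (z j) false * (if j = i then sgn false else 1)) =
      (1 + ρ * sgn (x j) * sgn (z j)) / 2 := by
    intro j hj
    simp only [Finset.ne_of_mem_erase hj, if_false, mixBit]
    simp only [sgn_true, sgn_false]
    ring
  rw [Finset.prod_congr rfl h2]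
  simp only [if_true, mixBit]
  simp only [sgn_true, sgn_false]
  ring

/-! ### The derivative in the noise rate -/

lemma hasDerivAt_noiseKer {n : ℕ} (ρ : ℝ) (x z : Fin n → Bool) :
    HasDerivAt (fun r => noiseKer r x z)
      (∑ i, (∏ j ∈ Finset.univ.erase i, (1 + ρ * sgn (x j) * sgn (z j)) / 2)
        * (sgn (x i) * sgn (z i) / 2)) ρ := by
  have h := HasDerivAt.fun_finsetProd (u := (Finset.univ : Finset (Fin n)))
    (f := fun i r => (1 + r * sgn (x i) * sgn (z i)) / 2)
    (f' := fun i => sgn (x i) * sgn (z i) / 2) (x := ρ) (by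
      intro i _
      have := ((((hasDerivAt_id ρ).mul_const (sgn (x i))).mul_const (sgn (z i))).const_add
        1).div_const 2
      simpa using this)
  simpa [noiseKer, smul_eq_mul] using h

lemma flipAt_flipAt {n : ℕ} (i : Fin n) (x : Fin n → Bool) : flipAt i (flipAt i x) = x := by
  simp [flipAt]

lemma sgn_not (b : Bool) : sgn (!b) = - sgn b := by
  cases b <;> simp [sgn]

/-- Reindexing by `x ↦ flipAt i x` replaces `f` by `Δ_i f` against a weight that is odd in
coordinate `i`. -/
lemma sum_mul_odd {n : ℕ} (f W : (Fin n → Bool) → ℝ) (i : Fin n)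
    (hW : ∀ x, W (flipAt i x) = - W x) :
    ∑ x, f x * W x = ∑ x, (f x - f (flipAt i x)) / 2 * W x := by
  have h : ∑ x, f (flipAt i x) * W (flipAt i x) = ∑ x, f x * W x :=
    Equiv.sum_comp (Function.Involutive.toPerm (flipAt i) (flipAt_flipAt i))
      (fun x => f x * W x)
  simp only [hW] at h
  have h2 : ∑ x, (f x - f (flipAt i x)) / 2 * W x =
      (∑ x, f x * W x + ∑ x, f (flipAt i x) * -W x) / 2 := by
    rw [← Finset.sum_add_distrib, Finset.sum_div]
    exact Finset.sum_congr rfl fun x _ => by ring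
  rw [h2, h]
  ring

/-- The `ρ`-derivative of `T_ρ f z`, scaled by `1 - ρ`, is the sum of `randGrad f x y` against the
joint law of `z` and `y` given `x`. -/
lemma deriv_identity {n : ℕ} (f : (Fin n → Bool) → ℝ) (ρ : ℝ) (z : Fin n → Bool) :
    (1 - ρ) * ∑ x, f x * (∑ i, (∏ j ∈ Finset.univ.erase i, (1 + ρ * sgn (x j) * sgn (z j)) / 2)
        * (sgn (x i) * sgn (z i) / 2)) =
      ∑ x, ∑ y, (∏ j, mixBit ρ (x j) (z j) (y j)) * randGrad f x y := by
  have hodd : ∀ i, ∑ x, f x * ((∏ j ∈ Finset.univ.erase i, (1 + ρ * sgn (x j) * sgn (z j)) / 2)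
        * (sgn (x i) * sgn (z i) / 2)) =
      ∑ x, (f x - f (flipAt i x)) / 2 *
        ((∏ j ∈ Finset.univ.erase i, (1 + ρ * sgn (x j) * sgn (z j)) / 2)
        * (sgn (x i) * sgn (z i) / 2)) := by
    intro i
    refine sum_mul_odd f (fun x =>
      (∏ j ∈ Finset.univ.erase i, (1 + ρ * sgn (x j) * sgn (z j)) / 2)
        * (sgn (x i) * sgn (z i) / 2)) i ?_
    intro x
    have h1 : ∀ j ∈ Finset.univ.erase i, (1 + ρ * sgn (flipAt i x j) * sgn (z j)) / 2 =
        (1 + ρ * sgn (x j) * sgn (z j)) / 2 := by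
      intro j hj
      rw [flipAt, Function.update_of_ne (Finset.ne_of_mem_erase hj)]
    have h2 : sgn (flipAt i x i) = - sgn (x i) := by
      rw [flipAt, Function.update_self, sgn_not]
    simp only [Finset.prod_congr rfl h1, h2]
    ring
  have hx : ∀ x : Fin n → Bool, ∑ y, (∏ j, mixBit ρ (x j) (z j) (y j)) * randGrad f x y =
      ∑ i, (1 - ρ) * ((f x - f (flipAt i x)) / 2 *
        ((∏ j ∈ Finset.univ.erase i, (1 + ρ * sgn (x j) * sgn (z j)) / 2)
        * (sgn (x i) * sgn (z i) / 2))) := by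
    intro x
    simp only [randGrad, Finset.mul_sum]
    rw [Finset.sum_comm]
    refine Finset.sum_congr rfl fun i _ => ?_
    have := sum_mixBit_mul_sgn ρ x z i
    calc _ = (∑ y : Fin n → Bool, (∏ j, mixBit ρ (x j) (z j) (y j)) * sgn (y i)) *
          (sgn (x i) * ((f x - f (flipAt i x)) / 2)) := by
          rw [Finset.sum_mul]
          exact Finset.sum_congr rfl fun y _ => by ring
      _ = _ := by rw [this]; ring
  simp only [hx]
  calc _ = ∑ i, (1 - ρ) * ∑ x, f x *
          ((∏ j ∈ Finset.univ.erase i, (1 + ρ * sgn (x j) * sgn (z j)) / 2)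
            * (sgn (x i) * sgn (z i) / 2)) := by
        simp only [Finset.mul_sum]
        rw [Finset.sum_comm]
    _ = _ := by
        simp only [hodd, Finset.mul_sum]
        rw [Finset.sum_comm]

/-- The pairing of `T_ρ f` with a function bounded by `1` has `ρ`-derivative at most
`1 / (1 - ρ)` times the mean of `|randGrad f|`, since the marginal law of `y` given `x` is uniform.
Here sums over `x` and `z` are not normalized; the factor `1 / 2 ^ n` averages over `y`. -/
lemma deriv_bound {n : ℕ} (f g : (Fin n → Bool) → ℝ) (hg : ∀ z, |g z| ≤ 1) {ρ : ℝ}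
    (h0 : 0 ≤ ρ) (h1 : ρ < 1) :
    ∑ z, g z * ∑ x, f x *
      (∑ i, (∏ j ∈ Finset.univ.erase i, (1 + ρ * sgn (x j) * sgn (z j)) / 2)
        * (sgn (x i) * sgn (z i) / 2)) ≤
      ((∑ x, ∑ y, |randGrad f x y|) / 2 ^ n) / (1 - ρ) := by
  rw [le_div_iff₀ (by linarith), mul_comm, Finset.mul_sum]
  simp only [mul_left_comm (1 - ρ), deriv_identity]
  calc _ ≤ ∑ z : Fin n → Bool, ∑ x, ∑ y,
        (∏ j, mixBit ρ (x j) (z j) (y j)) * |randGrad f x y| := by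
        refine Finset.sum_le_sum fun z _ => ?_
        simp only [Finset.mul_sum]
        refine Finset.sum_le_sum fun x _ => Finset.sum_le_sum fun y _ => ?_
        have hQ : 0 ≤ ∏ j, mixBit ρ (x j) (z j) (y j) :=
          Finset.prod_nonneg fun j _ => mixBit_nonneg h0 h1.le _ _ _
        rw [mul_left_comm]
        refine mul_le_mul_of_nonneg_left ?_ hQ
        calc _ ≤ |g z * randGrad f x y| := le_abs_self _
          _ = |g z| * |randGrad f x y| := abs_mul _ _
          _ ≤ 1 * |randGrad f x y| := mul_le_mul_of_nonneg_right (hg z) (abs_nonneg _)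
          _ = _ := one_mul _
    _ = _ := by
        rw [Finset.sum_comm, Finset.sum_div]
        refine Finset.sum_congr rfl fun x _ => ?_
        rw [Finset.sum_comm, Finset.sum_div]
        refine Finset.sum_congr rfl fun y _ => ?_
        rw [← Finset.sum_mul, sum_prod_mixBit]
        ring

/-! ### Integrating the derivative -/

/-- The `L¹` norm of `T_ρ f` for mean-zero `f`, by integrating `deriv_bound` from `0` to `ρ`. -/
lemma noise_bound {n : ℕ} (f : (Fin n → Bool) → ℝ) (hf : ∑ x, f x = 0) {ρ : ℝ}
    (h0 : 0 ≤ ρ) (h1 : ρ < 1) :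
    ∑ z, |∑ x, f x * noiseKer ρ x z| ≤
      ((∑ x, ∑ y, |randGrad f x y|) / 2 ^ n) * -Real.log (1 - ρ) := by
  set M := (∑ x, ∑ y, |randGrad f x y|) / 2 ^ n with hM
  -- The dual function is fixed at the endpoint `ρ` and does not move with the noise rate `r`.
  set g : (Fin n → Bool) → ℝ := fun z => SignType.sign (∑ x, f x * noiseKer ρ x z) with hgdef
  have hg : ∀ z, |g z| ≤ 1 := by
    intro z
    rcases lt_trichotomy (∑ x, f x * noiseKer ρ x z) 0 with h | h | h <;> simp [hgdef, h]
  set F : ℝ → ℝ := fun r => ∑ z, g z * ∑ x, f x * noiseKer r x z with hF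
  have hd : ∀ r, HasDerivAt F (∑ z, g z * ∑ x, f x *
      (∑ i, (∏ j ∈ Finset.univ.erase i, (1 + r * sgn (x j) * sgn (z j)) / 2)
        * (sgn (x i) * sgn (z i) / 2))) r := by
    intro r
    refine HasDerivAt.fun_sum fun z _ => HasDerivAt.const_mul _ ?_
    exact HasDerivAt.fun_sum fun x _ => (hasDerivAt_noiseKer r x z).const_mul _
  have hL : ∀ r < 1, HasDerivAt (fun r => M * -Real.log (1 - r) - F r) (M / (1 - r) -
      ∑ z, g z * ∑ x, f x *
      (∑ i, (∏ j ∈ Finset.univ.erase i, (1 + r * sgn (x j) * sgn (z j)) / 2)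
        * (sgn (x i) * sgn (z i) / 2))) r := by
    intro r hr
    have hl := ((((hasDerivAt_id r).const_sub 1).log
      (by simpa using (sub_pos.2 hr).ne')).neg.const_mul M).sub (hd r)
    refine hl.congr_deriv ?_
    simp only [id]
    ring
  have hmono : MonotoneOn (fun r => M * -Real.log (1 - r) - F r) (Set.Icc 0 ρ) := by
    refine monotoneOn_of_deriv_nonneg (convex_Icc 0 ρ) ?_ ?_ ?_
    · exact fun r hr => (hL r (hr.2.trans_lt h1)).continuousAt.continuousWithinAt
    · rw [interior_Icc]
      exact fun r hr => (hL r (hr.2.trans h1)).differentiableAt.differentiableWithinAt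
    · rw [interior_Icc]
      intro r hr
      rw [(hL r (hr.2.trans h1)).deriv]
      exact sub_nonneg.2 (deriv_bound f g hg hr.1.le (hr.2.trans h1))
  have hF0 : F 0 = 0 := by
    simp [hF, noiseKer, ← Finset.sum_mul, hf]
  have hFρ : F ρ = ∑ z, |∑ x, f x * noiseKer ρ x z| :=
    Finset.sum_congr rfl fun z _ => sign_mul_self _
  have := hmono (Set.left_mem_Icc.2 h0) (Set.right_mem_Icc.2 h0) h0
  simp only [hF0, sub_zero, Real.log_one, neg_zero, mul_zero] at this
  linarith

/-! ### Inverting the noise operator -/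

/-- `T_{1/ρ}` inverts `T_ρ`. -/
lemma noise_inv {n : ℕ} (f : (Fin n → Bool) → ℝ) {ρ : ℝ} (h0 : 0 < ρ) (w : Fin n → Bool) :
    ∑ z, noiseKer ρ⁻¹ z w * ∑ x, f x * noiseKer ρ x z = f w := by
  have hk : ∀ x, ∑ z, noiseKer ρ⁻¹ z w * noiseKer ρ x z = if x = w then 1 else 0 := by
    intro x
    simp only [noiseKer, ← Finset.prod_mul_distrib]
    rw [sum_prod_bool (fun i c => (1 + ρ⁻¹ * sgn c * sgn (w i)) / 2 *
      ((1 + ρ * sgn (x i) * sgn c) / 2))]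
    have hb : ∀ a b : Bool, (1 + ρ⁻¹ * sgn true * sgn b) / 2 *
        ((1 + ρ * sgn a * sgn true) / 2) + (1 + ρ⁻¹ * sgn false * sgn b) / 2 *
        ((1 + ρ * sgn a * sgn false) / 2) = if a = b then 1 else 0 := by
      intro a b
      cases a <;> cases b <;> simp [sgn] <;> field_simp <;> ring
    simp only [hb]
    rw [Fintype.prod_ite_zero]
    simp [funext_iff]
  simp only [Finset.mul_sum]
  rw [Finset.sum_comm]
  simp only [mul_left_comm _ (f _), ← Finset.mul_sum, hk]
  simp

/-- `T_{1/ρ}` has norm at most `ρ^{-n}` on `L¹`, since each coordinate contributes a factor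
`1/ρ`. -/
lemma noise_contract {n : ℕ} (f : (Fin n → Bool) → ℝ) {ρ : ℝ} (h0 : 0 < ρ) (h1 : ρ ≤ 1) :
    ∑ w, |f w| ≤ (ρ⁻¹) ^ n * ∑ z, |∑ x, f x * noiseKer ρ x z| := by
  have hr : 1 ≤ ρ⁻¹ := (one_le_inv₀ h0).2 h1
  have hk : ∀ z : Fin n → Bool, ∑ w, |noiseKer ρ⁻¹ z w| = (ρ⁻¹) ^ n := by
    intro z
    simp only [noiseKer, Finset.abs_prod]
    rw [sum_prod_bool (fun i c => |(1 + ρ⁻¹ * sgn (z i) * sgn c) / 2|)]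
    have hb : ∀ a : Bool, |(1 + ρ⁻¹ * sgn a * sgn true) / 2| +
        |(1 + ρ⁻¹ * sgn a * sgn false) / 2| = ρ⁻¹ := by
      intro a
      have e1 : |(1 + ρ⁻¹) / 2| = (1 + ρ⁻¹) / 2 := abs_of_nonneg (by linarith)
      have e2 : |(1 + -ρ⁻¹) / 2| = -((1 + -ρ⁻¹) / 2) := abs_of_nonpos (by linarith)
      cases a <;> simp only [sgn, if_true, Bool.false_eq_true, if_false, mul_one, mul_neg,
        neg_neg] <;> rw [e1, e2] <;> ring
    simp [hb]
  calc ∑ w, |f w| = ∑ w, |∑ z, noiseKer ρ⁻¹ z w * ∑ x, f x * noiseKer ρ x z| := by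
        simp only [noise_inv f h0]
    _ ≤ ∑ w, ∑ z, |noiseKer ρ⁻¹ z w| * |∑ x, f x * noiseKer ρ x z| := by
        refine Finset.sum_le_sum fun w _ => (Finset.abs_sum_le_sum_abs _ _).trans_eq ?_
        simp only [abs_mul]
    _ = _ := by
        rw [Finset.sum_comm]
        simp only [← Finset.sum_mul, hk, Finset.mul_sum]

lemma inv_pow_le {n : ℕ} (hn : 2 ≤ n) : ((1 - 1 / (n : ℝ))⁻¹) ^ n ≤ Real.exp 2 := by
  have hn' : (2 : ℝ) ≤ n := by exact_mod_cast hn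
  have hpos : (0 : ℝ) < n - 1 := by linarith
  have e : (1 - 1 / (n : ℝ))⁻¹ = 1 / ((n : ℝ) - 1) + 1 := by
    have : (n : ℝ) ≠ 0 := by linarith
    field_simp
    ring
  rw [e]
  calc _ ≤ (Real.exp (1 / ((n : ℝ) - 1))) ^ n :=
        pow_le_pow_left₀ (by positivity) (Real.add_one_le_exp _) n
    _ = Real.exp (n * (1 / ((n : ℝ) - 1))) := (Real.exp_nat_mul _ n).symm
    _ ≤ _ := by
        rw [Real.exp_le_exp, mul_one_div, div_le_iff₀ hpos]
        linarith

/-! ### Pisier's inequality -/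

/-- Pisier's inequality: there is an absolute `C > 0` such that for every `n ≥ 2`
and every `f : {-1,1}^n → ℝ` with `E[f] = 0`,
`E_x[|f(x)|] ≤ C·log n · E_{x,y}[|∑_i y_i x_i Δ_i f(x)|]`. -/
theorem stmt2 : ∃ C > (0:ℝ), ∀ n : ℕ, 2 ≤ n → ∀ f : (Fin n → Bool) → ℝ,
    (∑ x : Fin n → Bool, f x) / 2 ^ n = 0 →
    (∑ x : Fin n → Bool, |f x|) / 2 ^ n ≤
      C * Real.log n *
        ((∑ x : Fin n → Bool, ∑ y : Fin n → Bool,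
            |∑ i : Fin n, sgn (y i) * sgn (x i) * ((f x - f (flipAt i x)) / 2)|)
          / 2 ^ n / 2 ^ n) := by
  refine ⟨Real.exp 2, Real.exp_pos 2, fun n hn f hf => ?_⟩
  have hf0 : ∑ x, f x = 0 := by simpa using hf
  have hn' : (2 : ℝ) ≤ n := by exact_mod_cast hn
  have hninv : 1 / (n : ℝ) ≤ 1 / 2 := one_div_le_one_div_of_le (by norm_num) hn'
  have hninv0 : 0 < 1 / (n : ℝ) := by positivity
  -- At noise rate `ρ = 1 - 1/n` the integral of `1 / (1 - r)` is exactly `log n`,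
  -- while `ρ^{-n}` stays bounded.
  have h1 := noise_contract f (ρ := 1 - 1 / (n : ℝ)) (by linarith) (by linarith)
  have h2 := noise_bound f hf0 (ρ := 1 - 1 / (n : ℝ)) (by linarith) (by linarith)
  have hlog : -Real.log (1 - (1 - 1 / (n : ℝ))) = Real.log n := by
    rw [sub_sub_cancel, one_div, Real.log_inv, neg_neg]
  rw [hlog] at h2
  have h3 := h1.trans (mul_le_mul (inv_pow_le hn) h2
    (Finset.sum_nonneg fun _ _ => abs_nonneg _) (Real.exp_pos 2).le)
  simp only [randGrad] at h3
  calc _ ≤ _ := div_le_div_of_nonneg_right h3 (by positivity)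
    _ = _ := by ring

end Subcube
end
end

section
/- (Main restriction theorem, explicit form.) There is an absolute constant c > 0 such that the following holds. Let n ≥ 2, let σ ∈ [0,1] satisfy 5 ≤ σn ≤ n−5, and let p be any distribution on {-1,1}^n. Set γ = E_{S∼S_σ}[d_TV(p_{S̄}, U)] − 2·e^{−min(σ, 1−σ)·n/10}. If 0 < γ ≤ 1/2, then E_{ρ∼D_σ(p)}[ ‖μ(p_{|ρ})‖₂ ] ≥ c · σ · γ / ( (log n)² · log(n/γ) · log(1/γ) ). -/
/-!
The proof is a martingale argument. Reveal the coordinates of a uniform point `x` one at a time in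
uniformly random order; when `S` is the set of unrevealed coordinates, let
`L(S,x) = 2^(n-|S|) p_{S̄}(x_{S̄})` be the likelihood ratio, let `V(S,x)` be `L(S,x)` times the mean
vector of the restriction of `p`, and let `Z(S,x) = (n/|S|) ‖V(S,x)‖₂`. Three facts drive everything:

* revealing `x i = b` changes `L` by `± V i` (`ratio_erase`), so `L` is a martingale whose
  conditional variance is `‖V‖² / |S| = Z² |S| / n²`;
* `V` restricted to the surviving coordinates is a martingale, and dropping a random coordinate
  costs a factor `1 - 1/|S|` in norm, so `Z` is a submartingale (`scaledNorm_submartingale`);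
* averaging over `x` and over `S` of size `s`, `(1 - L)⁺` gives the mean total variation distance
  of `p_{S̄}` to uniform (`dTVU_projDist`), and `‖V‖₂` gives the mean of `‖μ(p_{|ρ})‖₂`
  (`expect_l2norm`).

If `M` denotes the running maximum of `Z`, started at `η > 0`, then `(L-1)²/(2M)` grows in
expectation by at most `Z |S| / (2 n²)` per step, while `min 1 M + Z log⁺ (1/M) - Z log (1/η)` is
a supermartingale (a Doob-type maximal inequality). The sum of the two, with a correction linear in
`Z`, is the potential `pot`; it starts below `η` and ends above `(1 - L)⁺ - (log (1/η) + 1) Z`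
because `|L-1| ≤ (L-1)²/(2M) + M`. The induction `iterate_le_pot` quantifies over `M`, so that no
path space is needed. The outcome, for every `s ≥ 1` and `η ∈ (0,1]`, is
`E_{|S|=s} d_TV(p_{S̄}, U) ≤ η + (log (1/η) + 1) (n/s) E_{|S|=s} ‖μ(p_{|ρ})‖₂` (`level_bound`).
Taking `η = γ/2`, averaging over binomial `s`, and bounding the event `|S| < σn/2` by a Chernoff
estimate proves the claim, with room to spare: the factors `(log n)²` and `log (n/γ)` are only used
to be at least `1`.
-/

open scoped Classical

noncomputable section

namespace Subcube

/-! ### The likelihood ratio and the scaled mean vector -/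

/-- Likelihood ratio at `x` of the projection of `p` off `S` with respect to uniform. -/
def ratio {n : ℕ} (p : (Fin n → Bool) → ℝ) (S : Finset (Fin n)) (x : Fin n → Bool) : ℝ :=
  2 ^ (n - S.card) * offMass p S x

/-- Coordinate `i` of the restricted mean vector, multiplied by the likelihood ratio. There is no
division, so no convention is needed where the conditioning event has mass zero. -/
def wmean {n : ℕ} (p : (Fin n → Bool) → ℝ) (S : Finset (Fin n)) (x : Fin n → Bool)
    (i : Fin n) : ℝ :=
  2 ^ (n - S.card) * ∑ y : Fin n → Bool, if ∀ j ∉ S, y j = x j then p y * sgn (y i) else 0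

/-- Euclidean norm of `wmean` over the coordinates in `S`. -/
def wnorm {n : ℕ} (p : (Fin n → Bool) → ℝ) (S : Finset (Fin n)) (x : Fin n → Bool) : ℝ :=
  √(∑ i ∈ S, wmean p S x i ^ 2)

/-- The rescaling of `wnorm` which is a submartingale as coordinates are revealed, as long as `S`
is nonempty. -/
def scaledNorm {n : ℕ} (p : (Fin n → Bool) → ℝ) (S : Finset (Fin n)) (x : Fin n → Bool) : ℝ :=
  n / S.card * wnorm p S x

lemma wnorm_nonneg {n : ℕ} (p : (Fin n → Bool) → ℝ) (S : Finset (Fin n)) (x : Fin n → Bool) :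
    0 ≤ wnorm p S x := Real.sqrt_nonneg _

lemma wnorm_sq {n : ℕ} (p : (Fin n → Bool) → ℝ) (S : Finset (Fin n)) (x : Fin n → Bool) :
    wnorm p S x ^ 2 = ∑ i ∈ S, wmean p S x i ^ 2 :=
  Real.sq_sqrt (Finset.sum_nonneg fun _ _ => sq_nonneg _)

lemma scaledNorm_nonneg {n : ℕ} (p : (Fin n → Bool) → ℝ) (S : Finset (Fin n))
    (x : Fin n → Bool) : 0 ≤ scaledNorm p S x :=
  mul_nonneg (by positivity) (wnorm_nonneg p S x)

lemma agree_erase {n : ℕ} {S : Finset (Fin n)} {i : Fin n} (hi : i ∈ S) (x y : Fin n → Bool)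
    (b : Bool) : (∀ j ∉ S.erase i, y j = Function.update x i b j) ↔
      (∀ j ∉ S, y j = x j) ∧ y i = b := by
  constructor
  · intro h
    refine ⟨fun j hj => ?_, ?_⟩
    · have hne : j ≠ i := fun e => hj (e ▸ hi)
      have := h j (fun h' => hj (Finset.mem_of_mem_erase h'))
      rwa [Function.update_of_ne hne] at this
    · have := h i (Finset.notMem_erase i S)
      rwa [Function.update_self] at this
  · rintro ⟨h1, h2⟩ j hj
    by_cases hji : j = i
    · subst hji; rw [Function.update_self]; exact h2
    · rw [Function.update_of_ne hji]
      exact h1 j (fun h' => hj (Finset.mem_erase.2 ⟨hji, h'⟩))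

lemma pow_erase {n : ℕ} {S : Finset (Fin n)} {i : Fin n} (hi : i ∈ S) :
    (2 : ℝ) ^ (n - (S.erase i).card) = 2 ^ (n - S.card) * 2 := by
  have h1 : S.card ≤ n := by simpa using Finset.card_le_univ S
  have h2 : 0 < S.card := Finset.card_pos.2 ⟨i, hi⟩
  rw [Finset.card_erase_of_mem hi, ← pow_succ]
  congr 1
  omega

lemma ratio_erase {n : ℕ} (p : (Fin n → Bool) → ℝ) {S : Finset (Fin n)} {i : Fin n}
    (hi : i ∈ S) (x : Fin n → Bool) (b : Bool) :
    ratio p (S.erase i) (Function.update x i b) = ratio p S x + sgn b * wmean p S x i := by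
  have key : 2 * offMass p (S.erase i) (Function.update x i b) = offMass p S x + sgn b *
      ∑ y : Fin n → Bool, if ∀ j ∉ S, y j = x j then p y * sgn (y i) else 0 := by
    unfold offMass
    simp only [agree_erase hi]
    rw [Finset.mul_sum, Finset.mul_sum, ← Finset.sum_add_distrib]
    refine Finset.sum_congr rfl fun y _ => ?_
    by_cases h : ∀ j ∉ S, y j = x j
    · simp only [and_iff_right h, if_pos h]
      cases b <;> cases hy : y i <;> simp [sgn] <;> ring
    · simp only [h, false_and, if_false]; ring
  unfold ratio wmean
  rw [pow_erase hi, mul_assoc, key]; ring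

lemma wmean_erase {n : ℕ} (p : (Fin n → Bool) → ℝ) {S : Finset (Fin n)} {i : Fin n}
    (hi : i ∈ S) (x : Fin n → Bool) (j : Fin n) :
    wmean p (S.erase i) (Function.update x i true) j
      + wmean p (S.erase i) (Function.update x i false) j = 2 * wmean p S x j := by
  unfold wmean
  rw [pow_erase hi, ← mul_add, ← Finset.sum_add_distrib, mul_comm _ (2:ℝ), mul_assoc]
  congr 2
  refine Finset.sum_congr rfl fun y _ => ?_
  simp only [agree_erase hi]
  by_cases h : ∀ j ∉ S, y j = x j
  · simp only [and_iff_right h, if_pos h]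
    cases hy : y i <;> simp
  · simp only [h, false_and, if_false]; ring

/-- The scaled norm of the weighted mean vector does not decrease on average when a uniformly
random coordinate of `S` is revealed to a uniformly random value (here multiplied by `|S|`). -/
lemma scaledNorm_submartingale {n : ℕ} (p : (Fin n → Bool) → ℝ) (S : Finset (Fin n))
    (hS : 2 ≤ S.card) (x : Fin n → Bool) :
    S.card * scaledNorm p S x ≤ ∑ i ∈ S,
      (scaledNorm p (S.erase i) (Function.update x i true)
        + scaledNorm p (S.erase i) (Function.update x i false)) / 2 := by
  set Y := wnorm p S x with hY
  have hY0 : 0 ≤ Y := wnorm_nonneg p S x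
  have hs : (2:ℝ) ≤ S.card := by exact_mod_cast hS
  rcases hY0.eq_or_lt with h0 | hpos
  · have : scaledNorm p S x = 0 := by unfold scaledNorm; rw [← hY, ← h0, mul_zero]
    rw [this, mul_zero]
    exact Finset.sum_nonneg fun i _ => div_nonneg
      (add_nonneg (scaledNorm_nonneg _ _ _) (scaledNorm_nonneg _ _ _)) (by norm_num)
  -- pairing the new vector with the old one replaces the triangle inequality
  have cs : ∀ i ∈ S, ∀ b, ∑ j ∈ S.erase i,
      wmean p (S.erase i) (Function.update x i b) j * wmean p S x j
        ≤ wnorm p (S.erase i) (Function.update x i b) * Y := by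
    intro i hi b
    refine (Real.sum_mul_le_sqrt_mul_sqrt _ _ _).trans ?_
    refine mul_le_mul_of_nonneg_left ?_ (Real.sqrt_nonneg _)
    exact Real.sqrt_le_sqrt (Finset.sum_le_sum_of_subset_of_nonneg (Finset.erase_subset _ _)
      fun _ _ _ => sq_nonneg _)
  have h1 : ∀ i ∈ S, Y ^ 2 - wmean p S x i ^ 2 ≤
      (wnorm p (S.erase i) (Function.update x i true)
        + wnorm p (S.erase i) (Function.update x i false)) / 2 * Y := by
    intro i hi
    have e : ∑ j ∈ S.erase i, wmean p (S.erase i) (Function.update x i true) j * wmean p S x j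
        + ∑ j ∈ S.erase i, wmean p (S.erase i) (Function.update x i false) j * wmean p S x j
        = 2 * (Y ^ 2 - wmean p S x i ^ 2) := by
      rw [hY, wnorm_sq, ← Finset.sum_erase_add _ _ hi, ← Finset.sum_add_distrib,
        add_sub_cancel_right, Finset.mul_sum]
      refine Finset.sum_congr rfl fun j _ => ?_
      rw [← add_mul, wmean_erase p hi]; ring
    have := cs i hi true
    have := cs i hi false
    linarith
  have h2 : (S.card - 1) * Y ≤ ∑ i ∈ S,
      (wnorm p (S.erase i) (Function.update x i true)
        + wnorm p (S.erase i) (Function.update x i false)) / 2 := by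
    refine le_of_mul_le_mul_right ?_ hpos
    rw [Finset.sum_mul]
    refine le_trans (le_of_eq ?_) (Finset.sum_le_sum h1)
    rw [Finset.sum_sub_distrib, ← wnorm_sq, ← hY]
    simp only [Finset.sum_const, nsmul_eq_mul]; ring
  have h3 : ∑ i ∈ S,
      (scaledNorm p (S.erase i) (Function.update x i true)
        + scaledNorm p (S.erase i) (Function.update x i false)) / 2
      = n / (S.card - 1) * ∑ i ∈ S,
      (wnorm p (S.erase i) (Function.update x i true)
        + wnorm p (S.erase i) (Function.update x i false)) / 2 := by
    rw [Finset.mul_sum]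
    refine Finset.sum_congr rfl fun i hi => ?_
    unfold scaledNorm
    rw [Finset.card_erase_of_mem hi, Nat.cast_sub (by omega)]
    push_cast; ring
  rw [h3]
  refine le_trans (le_of_eq ?_) (mul_le_mul_of_nonneg_left h2
    (div_nonneg (Nat.cast_nonneg n) (by linarith)))
  unfold scaledNorm
  rw [← hY]
  have : (S.card:ℝ) ≠ 0 := by linarith
  have : (S.card:ℝ) - 1 ≠ 0 := by linarith
  field_simp

/-! ### The potential -/

/-- The potential, as a function of the likelihood ratio `L`, the scaled norm `z` and a bound `M`
on the running maximum of the scaled norm. Note that `-log (min 1 M) = log⁺ (1/M)`. -/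
def pot (K L z M : ℝ) : ℝ :=
  (L - 1) ^ 2 / (2 * M) + min 1 M + z * (-Real.log (min 1 M) - K)

/-- Raising the running maximum from `M` to `max M z` does not increase the potential: this is the
pointwise form of Doob's maximal inequality. -/
lemma max_update {M z : ℝ} (hM : 0 < M) :
    min 1 (max M z) + z * -Real.log (min 1 (max M z)) ≤ min 1 M + z * -Real.log (min 1 M) := by
  rcases le_total z M with h | h
  · rw [max_eq_left h]
  rw [max_eq_right h]
  have hz : 0 < z := hM.trans_le h
  set m := min 1 M
  set m' := min 1 z
  have hm : 0 < m := lt_min one_pos hM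
  have hm' : 0 < m' := lt_min one_pos hz
  have hmm : m ≤ m' := min_le_min_left _ h
  have hz' : m' ≤ z := min_le_right _ _
  have h1 : 1 - m / m' ≤ Real.log m' - Real.log m := by
    have := Real.one_sub_inv_le_log_of_pos (div_pos hm' hm)
    rwa [inv_div, Real.log_div hm'.ne' hm.ne'] at this
  have h2 : m' - m ≤ z * (1 - m / m') := by
    have h3 : m' * (1 - m / m') = m' - m := by field_simp
    have h4 : 0 ≤ 1 - m / m' := by
      rw [sub_nonneg, div_le_one hm']; exact hmm
    nlinarith
  nlinarith [mul_le_mul_of_nonneg_left h1 hz.le]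

lemma pot_max_le {K L z M : ℝ} (hM : 0 < M) :
    pot K L z (max M z) ≤ pot K L z M := by
  have h1 := max_update (z := z) hM
  have h2 : (L - 1) ^ 2 / (2 * max M z) ≤ (L - 1) ^ 2 / (2 * M) := by
    gcongr
    exact le_max_left _ _
  unfold pot
  linarith

lemma pos_part_le_pot {K L z M : ℝ} (hL : 0 ≤ L) (hM : 0 < M) (hz : 0 ≤ z) :
    max 0 (1 - L) - K * z ≤ pot K L z M := by
  have hlog : 0 ≤ -Real.log (min 1 M) :=
    neg_nonneg.2 (Real.log_nonpos (lt_min one_pos hM).le (min_le_left _ _))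
  have h1 : 0 ≤ z * -Real.log (min 1 M) := mul_nonneg hz hlog
  have hq : 0 ≤ (L - 1) ^ 2 / (2 * M) := by positivity
  have h2 : max 0 (1 - L) ≤ (L - 1) ^ 2 / (2 * M) + min 1 M := by
    refine max_le (add_nonneg hq (lt_min one_pos hM).le) ?_
    rcases le_total 1 M with h | h
    · rw [min_eq_left h]; linarith
    · rw [min_eq_right h]
      have : (L - 1) ^ 2 / (2 * M) + M - (1 - L) = ((L - 1 + M) ^ 2 + M ^ 2) / (2 * M) := by
        field_simp; ring
      have : 0 ≤ ((L - 1 + M) ^ 2 + M ^ 2) / (2 * M) := by positivity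
      linarith
  unfold pot
  linarith

/-! ### Revealing coordinates one at a time -/

/-- Average of `f` after revealing a uniformly random coordinate of `S` to a uniformly random
value. -/
def step {n : ℕ} (f : Finset (Fin n) → (Fin n → Bool) → ℝ) (S : Finset (Fin n))
    (x : Fin n → Bool) : ℝ :=
  (∑ i ∈ S, (f (S.erase i) (Function.update x i true)
    + f (S.erase i) (Function.update x i false)) / 2) / S.card

/-- The supermartingale property of the potential, iterated. The coefficient of the scaled norm is
shifted by `1 - |S|/n` to absorb the growth of the quadratic term. -/
lemma iterate_le_pot {n : ℕ} (p : (Fin n → Bool) → ℝ) (hp : ∀ x, 0 ≤ p x) {η : ℝ} (hη : 0 < η)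
    (hη1 : η ≤ 1) (j : ℕ) :
    ∀ (S : Finset (Fin n)) (x : Fin n → Bool) (M : ℝ), j + 1 ≤ S.card → η ≤ M →
      scaledNorm p S x ≤ M →
      (step^[j] fun S x => max 0 (1 - ratio p S x) - (-Real.log η + 1) * scaledNorm p S x) S x
        ≤ pot (-Real.log η + (1 - S.card / n)) (ratio p S x) (scaledNorm p S x) M := by
  induction j with
  | zero =>
    intro S x M hS hM hz
    have hL : 0 ≤ ratio p S x := by
      unfold ratio offMass
      refine mul_nonneg (by positivity) (Finset.sum_nonneg fun y _ => ?_)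
      split_ifs
      exacts [hp y, le_rfl]
    have h := pos_part_le_pot (K := -Real.log η + (1 - S.card / n)) hL (hη.trans_le hM)
      (scaledNorm_nonneg p S x)
    refine le_trans ?_ h
    have : 0 ≤ (S.card:ℝ) / n * scaledNorm p S x :=
      mul_nonneg (by positivity) (scaledNorm_nonneg p S x)
    simp only [Function.iterate_zero, id]
    nlinarith
  | succ j ih =>
    intro S x M hS hM hz
    have hM0 : 0 < M := hη.trans_le hM
    have hs : (2:ℝ) ≤ S.card := by exact_mod_cast (by omega : 2 ≤ S.card)
    have hsn : (S.card:ℝ) ≤ n := by exact_mod_cast (by simpa using Finset.card_le_univ S)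
    have hn : (0:ℝ) < n := by linarith
    rw [Function.iterate_succ_apply']
    set F := (step^[j] fun S x =>
      max 0 (1 - ratio p S x) - (-Real.log η + 1) * scaledNorm p S x)
    set L := ratio p S x
    set z := scaledNorm p S x with hzdef
    set k := -Real.log (min 1 M) - (-Real.log η + (1 - (S.card - 1) / n)) with hk
    have hk0 : k ≤ 0 := by
      have h1 : Real.log η ≤ Real.log (min 1 M) := Real.log_le_log hη (le_min hη1 hM)
      have h2 : ((S.card:ℝ) - 1) / n ≤ 1 := by rw [div_le_one hn]; linarith
      rw [hk]; linarith
    have hb : ∀ i ∈ S, ∀ b, F (S.erase i) (Function.update x i b) ≤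
        (L + sgn b * wmean p S x i - 1) ^ 2 / (2 * M) + min 1 M
          + scaledNorm p (S.erase i) (Function.update x i b) * k := by
      intro i hi b
      have hc : (S.erase i).card = S.card - 1 := Finset.card_erase_of_mem hi
      have h1 := ih (S.erase i) (Function.update x i b)
        (max M (scaledNorm p (S.erase i) (Function.update x i b))) (by omega)
        (hM.trans (le_max_left _ _)) (le_max_right _ _)
      refine (h1.trans (pot_max_le hM0)).trans (le_of_eq ?_)
      rw [ratio_erase p hi, hc, Nat.cast_sub (by omega)]
      unfold pot
      rw [hk]; push_cast; ring
    have hsum : ∑ i ∈ S, (F (S.erase i) (Function.update x i true)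
        + F (S.erase i) (Function.update x i false)) / 2 ≤
        S.card * ((L - 1) ^ 2 / (2 * M) + min 1 M) + wnorm p S x ^ 2 / (2 * M)
          + (S.card * z) * k := by
      have h1 : ∑ i ∈ S, (F (S.erase i) (Function.update x i true)
        + F (S.erase i) (Function.update x i false)) / 2 ≤
          ∑ i ∈ S, (((L - 1) ^ 2 / (2 * M) + min 1 M) + wmean p S x i ^ 2 / (2 * M)
          + (scaledNorm p (S.erase i) (Function.update x i true)
            + scaledNorm p (S.erase i) (Function.update x i false)) / 2 * k) := by
        refine Finset.sum_le_sum fun i hi => ?_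
        have ht := hb i hi true
        have hf := hb i hi false
        simp only [sgn, if_true, Bool.false_eq_true, if_false] at ht hf
        have e : ((L + 1 * wmean p S x i - 1) ^ 2 / (2 * M)
            + (L + -1 * wmean p S x i - 1) ^ 2 / (2 * M)) / 2
            = (L - 1) ^ 2 / (2 * M) + wmean p S x i ^ 2 / (2 * M) := by ring
        linarith
      refine h1.trans ?_
      rw [Finset.sum_add_distrib, Finset.sum_add_distrib, ← Finset.sum_mul, ← Finset.sum_div,
        ← wnorm_sq, Finset.sum_const, nsmul_eq_mul]
      have := mul_le_mul_of_nonpos_right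
        (scaledNorm_submartingale p S (by omega) x) hk0
      linarith
    have hquad : wnorm p S x ^ 2 / (2 * M) ≤ S.card * (z / n) := by
      have hy : wnorm p S x = S.card / n * z := by
        rw [hzdef]; unfold scaledNorm
        have : (S.card:ℝ) ≠ 0 := by linarith
        field_simp
      have hz0 : 0 ≤ z := scaledNorm_nonneg p S x
      rw [hy, div_le_iff₀ (by positivity)]
      have e : S.card * (z / n) * (2 * M) - (S.card / n * z) ^ 2
          = S.card / n * z * (2 * M - S.card / n * z) := by field_simp
      have h1 : (S.card:ℝ) / n * z ≤ z := by
        have : (S.card:ℝ) / n ≤ 1 := by rw [div_le_one hn]; exact hsn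
        nlinarith
      have : 0 ≤ S.card / n * z * (2 * M - S.card / n * z) :=
        mul_nonneg (by positivity) (by linarith)
      linarith
    unfold step
    rw [div_le_iff₀ (by linarith)]
    refine hsum.trans ?_
    have e : pot (-Real.log η + (1 - S.card / n)) L z M * S.card
        = S.card * ((L - 1) ^ 2 / (2 * M) + min 1 M) + S.card * (z / n) + (S.card * z) * k := by
      unfold pot
      rw [hk]; field_simp; ring
    linarith

/-! ### Averaging over sets of a given size -/

lemma sum_update {n : ℕ} (g : (Fin n → Bool) → ℝ) (i : Fin n) :
    ∑ x : Fin n → Bool, (g (Function.update x i true) + g (Function.update x i false)) / 2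
      = ∑ x : Fin n → Bool, g x := by
  have hflip : ∑ x : Fin n → Bool, g (flipAt i x) = ∑ x : Fin n → Bool, g x := by
    refine Function.Bijective.sum_comp (Function.Involutive.bijective fun x => ?_) g
    funext j
    by_cases h : j = i
    · subst h; simp [flipAt]
    · simp [flipAt, h]
  have h : ∀ x : Fin n → Bool, g (Function.update x i true) + g (Function.update x i false)
      = g x + g (flipAt i x) := by
    intro x
    have hx : g x = g (Function.update x i (x i)) := by rw [Function.update_eq_self]
    rw [hx, flipAt]
    cases x i <;> simp [add_comm]
  simp only [h]
  rw [← Finset.sum_div, Finset.sum_add_distrib, hflip]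
  ring

/-- Average over all sets of size `s` and all points. -/
def avg {n : ℕ} (s : ℕ) (f : Finset (Fin n) → (Fin n → Bool) → ℝ) : ℝ :=
  (∑ S ∈ (Finset.univ : Finset (Fin n)).powersetCard s, ∑ x, f S x) / n.choose s

lemma sum_erase_powersetCard {n : ℕ} (s : ℕ) (G : Finset (Fin n) → ℝ) :
    ∑ S ∈ (Finset.univ : Finset (Fin n)).powersetCard (s + 1), ∑ i ∈ S, G (S.erase i)
      = (n - s : ℕ) * ∑ S ∈ (Finset.univ : Finset (Fin n)).powersetCard s, G S := by
  rw [Finset.mul_sum]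
  have h : ∀ T ∈ (Finset.univ : Finset (Fin n)).powersetCard s,
      ((n - s : ℕ):ℝ) * G T = ∑ i ∈ Tᶜ, G T := by
    intro T hT
    rw [Finset.sum_const, nsmul_eq_mul, Finset.card_compl, Fintype.card_fin,
      (Finset.mem_powersetCard.1 hT).2]
  rw [Finset.sum_congr rfl h, Finset.sum_sigma', Finset.sum_sigma']
  refine Finset.sum_bij' (fun a _ => ⟨a.1.erase a.2, a.2⟩) (fun a _ => ⟨insert a.2 a.1, a.2⟩)
    ?_ ?_ ?_ ?_ ?_
  · rintro ⟨S, i⟩ h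
    simp only [Finset.mem_sigma, Finset.mem_powersetCard, Finset.subset_univ, true_and,
      Finset.mem_compl] at h ⊢
    exact ⟨by rw [Finset.card_erase_of_mem h.2]; omega, Finset.notMem_erase _ _⟩
  · rintro ⟨S, i⟩ h
    simp only [Finset.mem_sigma, Finset.mem_powersetCard, Finset.subset_univ, true_and,
      Finset.mem_compl] at h ⊢
    exact ⟨by rw [Finset.card_insert_of_notMem h.2]; omega, Finset.mem_insert_self _ _⟩
  · rintro ⟨S, i⟩ h
    simp only [Finset.mem_sigma] at h
    simp [Finset.insert_erase h.2]
  · rintro ⟨S, i⟩ h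
    simp only [Finset.mem_sigma, Finset.mem_compl] at h
    simp [Finset.erase_insert h.2]
  · rintro ⟨S, i⟩ _
    rfl

lemma avg_step {n s : ℕ} (hs : s + 1 ≤ n) (f : Finset (Fin n) → (Fin n → Bool) → ℝ) :
    avg (s + 1) (step f) = avg s f := by
  have h1 : ∑ S ∈ (Finset.univ : Finset (Fin n)).powersetCard (s + 1), ∑ x, step f S x
      = (∑ S ∈ (Finset.univ : Finset (Fin n)).powersetCard (s + 1),
          ∑ i ∈ S, ∑ x, f (S.erase i) x) / (s + 1 : ℕ) := by
    rw [Finset.sum_div]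
    refine Finset.sum_congr rfl fun S hS => ?_
    unfold step
    rw [(Finset.mem_powersetCard.1 hS).2, ← Finset.sum_div, Finset.sum_comm]
    congr 1
    exact Finset.sum_congr rfl fun i _ => sum_update _ i
  unfold avg
  rw [h1, sum_erase_powersetCard s (fun S => ∑ x, f S x)]
  have hc : (n.choose (s + 1) : ℝ) * (s + 1 : ℕ) = n.choose s * (n - s : ℕ) := by
    exact_mod_cast Nat.choose_succ_right_eq n s
  have p1 : (0:ℝ) < n.choose (s + 1) := by exact_mod_cast Nat.choose_pos hs
  have p2 : (0:ℝ) < n.choose s := by exact_mod_cast Nat.choose_pos (by omega : s ≤ n)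
  have p3 : (0:ℝ) < (s + 1 : ℕ) := by positivity
  rw [div_div, div_eq_div_iff (by positivity) p2.ne', mul_comm ((s + 1 : ℕ):ℝ), hc]
  ring

lemma avg_iterate {n : ℕ} (f : Finset (Fin n) → (Fin n → Bool) → ℝ) (j : ℕ) :
    ∀ s, s + j ≤ n → avg (s + j) (step^[j] f) = avg s f := by
  induction j with
  | zero => intro s _; rfl
  | succ j ih =>
    intro s hs
    rw [Function.iterate_succ_apply', ← add_assoc, avg_step (by omega), ih s (by omega)]

lemma ratio_univ {n : ℕ} {p : (Fin n → Bool) → ℝ} (hp : IsDist p) (x : Fin n → Bool) :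
    ratio p Finset.univ x = 1 := by
  simp [ratio, offMass, hp.2]

lemma avg_terminal_le {n : ℕ} {p : (Fin n → Bool) → ℝ} (hp : IsDist p) {η : ℝ} (hη : 0 < η)
    (hη1 : η ≤ 1) {s : ℕ} (hs : 1 ≤ s) (hsn : s ≤ n) :
    avg s (fun S x => max 0 (1 - ratio p S x) - (-Real.log η + 1) * scaledNorm p S x)
      ≤ 2 ^ n * η := by
  obtain ⟨j, rfl⟩ := Nat.exists_eq_add_of_le hsn
  rw [← avg_iterate _ j s le_rfl]
  unfold avg
  have hu : (Finset.univ : Finset (Fin (s + j))).powersetCard (s + j) = {Finset.univ} := by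
    have := Finset.powersetCard_self (Finset.univ : Finset (Fin (s + j)))
    rwa [Finset.card_univ, Fintype.card_fin] at this
  rw [hu, Finset.sum_singleton, Nat.choose_self, Nat.cast_one, div_one]
  have hx : ∀ x ∈ (Finset.univ : Finset (Fin (s + j) → Bool)),
      (step^[j] fun S x => max 0 (1 - ratio p S x) - (-Real.log η + 1) * scaledNorm p S x)
        Finset.univ x ≤ η := by
    intro x _
    have h := iterate_le_pot p hp.1 hη hη1 j Finset.univ x
      (max η (scaledNorm p Finset.univ x)) (by simp; omega) (le_max_left _ _) (le_max_right _ _)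
    refine (h.trans (pot_max_le hη)).trans (le_of_eq ?_)
    have hne : ((s:ℝ) + j) ≠ 0 := by
      have : (1:ℝ) ≤ s := by exact_mod_cast hs
      positivity
    unfold pot
    rw [ratio_univ hp, min_eq_right hη1]
    simp [hne]
  refine (Finset.sum_le_sum hx).trans (le_of_eq ?_)
  simp

/-! ### Identification with total variation distance and restricted means -/

/-- Splitting a point of the cube into its coordinates off `S` and in `S`. -/
lemma sum_split {n : ℕ} (S : Finset (Fin n)) (g : (Fin n → Bool) → ℝ) :
    ∑ x : Fin n → Bool, g x = ∑ u : {i : Fin n // i ∉ S} → Bool,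
      ∑ v : {i : Fin n // i ∈ S} → Bool,
        g ((Equiv.piEquivPiSubtypeProd (· ∈ S) fun _ => Bool).symm (v, u)) := by
  rw [Finset.sum_comm, ← Fintype.sum_prod_type'
    (f := fun v u => g ((Equiv.piEquivPiSubtypeProd (· ∈ S) fun _ => Bool).symm (v, u)))]
  exact (Equiv.sum_comp (Equiv.piEquivPiSubtypeProd (· ∈ S) fun _ => Bool).symm g).symm

lemma split_off {n : ℕ} (S : Finset (Fin n)) (v : {i : Fin n // i ∈ S} → Bool)
    (u : {i : Fin n // i ∉ S} → Bool) (i : Fin n) (hi : i ∉ S) :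
    (Equiv.piEquivPiSubtypeProd (· ∈ S) fun _ => Bool).symm (v, u) i = u ⟨i, hi⟩ := by
  simp [Equiv.piEquivPiSubtypeProd, hi]

lemma split_on {n : ℕ} (S : Finset (Fin n)) (v : {i : Fin n // i ∈ S} → Bool)
    (u : {i : Fin n // i ∉ S} → Bool) (i : Fin n) (hi : i ∈ S) :
    (Equiv.piEquivPiSubtypeProd (· ∈ S) fun _ => Bool).symm (v, u) i = v ⟨i, hi⟩ := by
  simp [Equiv.piEquivPiSubtypeProd, hi]

lemma projDist_eq_sum {n : ℕ} (p : (Fin n → Bool) → ℝ) (S : Finset (Fin n))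
    (u : {i : Fin n // i ∉ S} → Bool) :
    projDist p S u = ∑ v : {i : Fin n // i ∈ S} → Bool,
      p ((Equiv.piEquivPiSubtypeProd (· ∈ S) fun _ => Bool).symm (v, u)) := by
  unfold projDist
  rw [sum_split S, Finset.sum_eq_single u]
  · refine Finset.sum_congr rfl fun v _ => if_pos ?_
    rintro ⟨i, hi⟩
    exact split_off S v u i hi
  · intro u' _ hne
    refine Finset.sum_eq_zero fun v _ => if_neg fun h => hne ?_
    funext i
    rw [← h i]; exact (split_off S v u' i.1 i.2).symm
  · intro h; exact absurd (Finset.mem_univ u) h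

lemma offMass_split {n : ℕ} (p : (Fin n → Bool) → ℝ) (S : Finset (Fin n))
    (v : {i : Fin n // i ∈ S} → Bool) (u : {i : Fin n // i ∉ S} → Bool) :
    offMass p S ((Equiv.piEquivPiSubtypeProd (· ∈ S) fun _ => Bool).symm (v, u))
      = projDist p S u := by
  unfold offMass projDist
  refine Finset.sum_congr rfl fun x _ => if_congr ?_ rfl rfl
  constructor
  · rintro h ⟨i, hi⟩
    rw [h i hi, split_off S v u i hi]
  · intro h i hi
    rw [split_off S v u i hi]; exact h ⟨i, hi⟩

lemma card_off {n : ℕ} (S : Finset (Fin n)) :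
    Fintype.card ({i : Fin n // i ∉ S} → Bool) = 2 ^ (n - S.card) := by
  simp [Fintype.card_subtype_compl]

lemma card_on {n : ℕ} (S : Finset (Fin n)) :
    Fintype.card ({i : Fin n // i ∈ S} → Bool) = 2 ^ S.card := by
  simp

lemma card_le {n : ℕ} (S : Finset (Fin n)) : S.card ≤ n := by
  simpa using Finset.card_le_univ S

lemma projDist_isDist {n : ℕ} {p : (Fin n → Bool) → ℝ} (hp : IsDist p) (S : Finset (Fin n)) :
    IsDist (projDist p S) := by
  constructor
  · intro u
    rw [projDist_eq_sum]
    exact Finset.sum_nonneg fun _ _ => hp.1 _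
  · simp only [projDist_eq_sum]
    rw [← sum_split S p, hp.2]

lemma dTVU_eq {α : Type*} [Fintype α] [Nonempty α] {q : α → ℝ} (hq : IsDist q) :
    dTVU q = ∑ a, max 0 (1 / (Fintype.card α : ℝ) - q a) := by
  have hN : (Fintype.card α : ℝ) ≠ 0 := by exact_mod_cast Fintype.card_ne_zero
  have h : ∀ a, |q a - 1 / (Fintype.card α : ℝ)|
      = 2 * max 0 (1 / (Fintype.card α : ℝ) - q a) + (q a - 1 / (Fintype.card α : ℝ)) := by
    intro a
    rcases le_total (q a) (1 / (Fintype.card α : ℝ)) with h | h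
    · rw [abs_of_nonpos (by linarith), max_eq_right (by linarith)]; ring
    · rw [abs_of_nonneg (by linarith), max_eq_left (by linarith)]; ring
  unfold dTVU
  simp only [h]
  rw [Finset.sum_add_distrib, Finset.sum_sub_distrib, hq.2, ← Finset.mul_sum]
  simp [hN]

lemma dTVU_le_one {α : Type*} [Fintype α] [Nonempty α] {q : α → ℝ} (hq : IsDist q) :
    dTVU q ≤ 1 := by
  have hN : (Fintype.card α : ℝ) ≠ 0 := by exact_mod_cast Fintype.card_ne_zero
  rw [dTVU_eq hq]
  calc ∑ a, max 0 (1 / (Fintype.card α : ℝ) - q a)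
      ≤ ∑ _a : α, 1 / (Fintype.card α : ℝ) :=
        Finset.sum_le_sum fun a _ => max_le (by positivity) (by linarith [hq.1 a])
    _ = 1 := by simp [hN]

lemma dTVU_projDist {n : ℕ} {p : (Fin n → Bool) → ℝ} (hp : IsDist p) (S : Finset (Fin n)) :
    ∑ x, max 0 (1 - ratio p S x) = 2 ^ n * dTVU (projDist p S) := by
  rw [dTVU_eq (projDist_isDist hp S), sum_split S, Finset.mul_sum]
  refine Finset.sum_congr rfl fun u _ => ?_
  unfold ratio
  simp only [offMass_split]
  rw [Finset.sum_const, Finset.card_univ, card_on, card_off, nsmul_eq_mul]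
  have h2 : (2:ℝ) ^ n = 2 ^ S.card * 2 ^ (n - S.card) := by
    rw [← pow_add, Nat.add_sub_of_le (card_le S)]
  have hpos : (0:ℝ) < 2 ^ (n - S.card) := by positivity
  rw [h2, mul_assoc]
  push_cast
  congr 1
  rw [mul_max_of_nonneg _ _ hpos.le, mul_zero, mul_sub, mul_one_div_cancel hpos.ne']

lemma meanVec_restrictDist {n : ℕ} (p : (Fin n → Bool) → ℝ) (S : Finset (Fin n))
    (x : Fin n → Bool) (i : {i : Fin n // i ∈ S}) :
    meanVec (restrictDist p S x) i
      = (∑ y : Fin n → Bool, if ∀ j ∉ S, y j = x j then p y * sgn (y i) else 0)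
        / offMass p S x := by
  unfold meanVec restrictDist
  simp only [div_mul_eq_mul_div, Finset.sum_mul]
  rw [← Finset.sum_div, Finset.sum_comm]
  congr 1
  refine Finset.sum_congr rfl fun y _ => ?_
  rw [Finset.sum_eq_single (fun k : {i : Fin n // i ∈ S} => y k)]
  · by_cases h : ∀ j ∉ S, y j = x j <;> simp [h]
  · intro z _ hz
    rw [if_neg, zero_mul]
    rintro ⟨h, _⟩
    exact hz (funext fun k => (h k).symm)
  · intro h; exact absurd (@Finset.mem_univ _ (_) _) h

lemma wnorm_eq {n : ℕ} {p : (Fin n → Bool) → ℝ} (hp : ∀ x, 0 ≤ p x) (S : Finset (Fin n))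
    (x : Fin n → Bool) :
    wnorm p S x = ratio p S x * l2norm (meanVec (restrictDist p S x)) := by
  have hm0 : 0 ≤ offMass p S x := by
    unfold offMass
    refine Finset.sum_nonneg fun y _ => ?_
    split_ifs
    exacts [hp y, le_rfl]
  have hi : ∀ i : {i : Fin n // i ∈ S},
      wmean p S x i = ratio p S x * meanVec (restrictDist p S x) i := by
    intro i
    rw [meanVec_restrictDist]
    unfold wmean ratio
    rw [mul_assoc]
    congr 1
    rcases hm0.eq_or_lt with h0 | hpos
    · rw [← h0, zero_mul]
      -- where the conditioning event has mass zero, `wmean` vanishes as well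
      have hz := (Finset.sum_eq_zero_iff_of_nonneg (fun y _ => by
        split_ifs
        exacts [hp y, le_rfl])).1 h0.symm
      refine Finset.sum_eq_zero fun y hy => ?_
      have := hz y hy
      by_cases h : ∀ j ∉ S, y j = x j
      · rw [if_pos h] at this ⊢; rw [this, zero_mul]
      · rw [if_neg h]
    · rw [mul_div_cancel₀ _ hpos.ne']
  have hr : 0 ≤ ratio p S x := mul_nonneg (by positivity) hm0
  unfold wnorm l2norm normSq
  rw [← Finset.sum_coe_sort S (fun i => wmean p S x i ^ 2)]
  simp only [hi, mul_pow]
  rw [← Finset.mul_sum, Real.sqrt_mul (sq_nonneg _), Real.sqrt_sq hr]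

lemma expect_l2norm {n : ℕ} {p : (Fin n → Bool) → ℝ} (hp : ∀ x, 0 ≤ p x)
    (S : Finset (Fin n)) :
    ∑ x, wnorm p S x = 2 ^ n * ∑ x, p x * l2norm (meanVec (restrictDist p S x)) := by
  have h2 : (2:ℝ) ^ n = 2 ^ S.card * 2 ^ (n - S.card) := by
    rw [← pow_add, Nat.add_sub_of_le (card_le S)]
  -- the restriction only depends on the coordinates off `S`
  have hdep : ∀ u : {i : Fin n // i ∉ S} → Bool, ∃ r : ℝ,
      ∀ v : {i : Fin n // i ∈ S} → Bool, l2norm (meanVec (restrictDist p S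
        ((Equiv.piEquivPiSubtypeProd (· ∈ S) fun _ => Bool).symm (v, u)))) = r := by
    intro u
    refine ⟨l2norm (meanVec (restrictDist p S
      ((Equiv.piEquivPiSubtypeProd (· ∈ S) fun _ => Bool).symm (fun _ => true, u)))), fun v => ?_⟩
    congr 2
    funext w
    unfold restrictDist
    rw [offMass_split, offMass_split]
    congr 1
    refine Finset.sum_congr rfl fun x _ => if_congr (and_congr_right fun _ => ?_) rfl rfl
    refine forall₂_congr fun j hj => ?_
    rw [split_off S _ u j hj, split_off S _ u j hj]
  choose r hr using hdep
  simp only [wnorm_eq hp]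
  rw [sum_split S, sum_split S (fun x => p x * l2norm (meanVec (restrictDist p S x))),
    Finset.mul_sum]
  refine Finset.sum_congr rfl fun u _ => ?_
  simp only [hr, ratio, offMass_split]
  rw [Finset.sum_const, Finset.card_univ, card_on, nsmul_eq_mul, ← Finset.sum_mul,
    ← projDist_eq_sum, h2]
  push_cast
  ring

/-- The restriction inequality for star sets of a fixed size, in a form linear in the restricted
means so that it can be averaged over the size. -/
lemma level_bound {n : ℕ} {p : (Fin n → Bool) → ℝ} (hp : IsDist p) {η : ℝ} (hη : 0 < η)
    (hη1 : η ≤ 1) {s : ℕ} (hs : 1 ≤ s) (hsn : s ≤ n) :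
    ∑ S ∈ (Finset.univ : Finset (Fin n)).powersetCard s, dTVU (projDist p S)
      ≤ ∑ S ∈ (Finset.univ : Finset (Fin n)).powersetCard s, (η + (-Real.log η + 1) *
        (n / s * ∑ x, p x * l2norm (meanVec (restrictDist p S x)))) := by
  have h := avg_terminal_le hp hη hη1 hs hsn
  have p2 : (0:ℝ) < n.choose s := by exact_mod_cast Nat.choose_pos hsn
  unfold avg at h
  rw [div_le_iff₀ p2] at h
  have e : ∑ S ∈ (Finset.univ : Finset (Fin n)).powersetCard s, ∑ x,
      (max 0 (1 - ratio p S x) - (-Real.log η + 1) * scaledNorm p S x)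
      = 2 ^ n * (∑ S ∈ (Finset.univ : Finset (Fin n)).powersetCard s, dTVU (projDist p S)
        - ∑ S ∈ (Finset.univ : Finset (Fin n)).powersetCard s, (-Real.log η + 1) *
        (n / s * ∑ x, p x * l2norm (meanVec (restrictDist p S x)))) := by
    rw [← Finset.sum_sub_distrib, Finset.mul_sum]
    refine Finset.sum_congr rfl fun S hS => ?_
    rw [Finset.sum_sub_distrib, dTVU_projDist hp, ← Finset.mul_sum]
    unfold scaledNorm
    rw [← Finset.mul_sum, expect_l2norm hp.1, (Finset.mem_powersetCard.1 hS).2]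
    ring
  rw [e, mul_assoc] at h
  have h' := le_of_mul_le_mul_left h (by positivity)
  rw [Finset.sum_add_distrib, Finset.sum_const, Finset.card_powersetCard, Finset.card_univ,
    Fintype.card_fin, nsmul_eq_mul]
  linarith

/-! ### Averaging over a binomial random set -/

lemma sum_weight {n : ℕ} (a b : ℝ) :
    ∑ S : Finset (Fin n), a ^ S.card * b ^ (n - S.card) = (a + b) ^ n := by
  simpa using Fintype.sum_pow_mul_eq_add_pow (Fin n) a b

lemma chernoff {n : ℕ} {σ : ℝ} (h0 : 0 ≤ σ) (h1 : σ ≤ 1) :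
    ∑ S : Finset (Fin n) with (S.card : ℝ) < σ * n / 2, σ ^ S.card * (1 - σ) ^ (n - S.card)
      ≤ Real.exp (-(σ * n / 10)) := by
  have hσ : 0 ≤ 1 - σ := by linarith
  set E := Real.exp (Real.log 2 * (σ * n / 2)) with hE
  have hpt : ∀ S : Finset (Fin n), (S.card : ℝ) < σ * n / 2 →
      σ ^ S.card * (1 - σ) ^ (n - S.card)
        ≤ E * ((σ / 2) ^ S.card * (1 - σ) ^ (n - S.card)) := by
    intro S hS
    have h2 : (2:ℝ) ^ S.card ≤ E := by
      have : (2:ℝ) ^ S.card = Real.exp (Real.log 2 * S.card) := by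
        rw [mul_comm, Real.exp_nat_mul, Real.exp_log (by norm_num)]
      rw [this, hE]
      exact Real.exp_le_exp.2 (mul_le_mul_of_nonneg_left hS.le (Real.log_nonneg (by norm_num)))
    have e : σ ^ S.card = 2 ^ S.card * (σ / 2) ^ S.card := by
      rw [← mul_pow]; congr 1; ring
    rw [e, mul_assoc]
    exact mul_le_mul_of_nonneg_right h2 (by positivity)
  calc ∑ S : Finset (Fin n) with (S.card : ℝ) < σ * n / 2, σ ^ S.card * (1 - σ) ^ (n - S.card)
      ≤ ∑ S : Finset (Fin n) with (S.card : ℝ) < σ * n / 2,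
          E * ((σ / 2) ^ S.card * (1 - σ) ^ (n - S.card)) :=
        Finset.sum_le_sum fun S hS => hpt S (Finset.mem_filter.1 hS).2
    _ ≤ ∑ S : Finset (Fin n), E * ((σ / 2) ^ S.card * (1 - σ) ^ (n - S.card)) :=
        Finset.sum_le_sum_of_subset_of_nonneg (Finset.filter_subset _ _)
          fun _ _ _ => by positivity
    _ = E * (1 - σ / 2) ^ n := by
        rw [← Finset.mul_sum, sum_weight]; congr 2; ring
    _ ≤ E * Real.exp (-(σ / 2)) ^ n := by
        have : 1 - σ / 2 ≤ Real.exp (-(σ / 2)) := by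
          linarith [Real.add_one_le_exp (-(σ / 2))]
        have : 0 ≤ 1 - σ / 2 := by linarith
        gcongr
    _ = Real.exp (Real.log 2 * (σ * n / 2) + n * (-(σ / 2))) := by
        rw [Real.exp_add, Real.exp_nat_mul]
    _ ≤ Real.exp (-(σ * n / 10)) := by
        refine Real.exp_le_exp.2 ?_
        have hl := Real.log_two_lt_d9
        have : 0 ≤ σ * n := by positivity
        nlinarith

lemma sum_by_card {n : ℕ} (H : Finset (Fin n) → ℝ) :
    ∑ S : Finset (Fin n), H S
      = ∑ s ∈ Finset.range (n + 1), ∑ S ∈ (Finset.univ : Finset (Fin n)).powersetCard s, H S := by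
  rw [← Finset.powerset_univ, Finset.sum_powerset, Finset.card_univ, Fintype.card_fin]

lemma good_bound {n : ℕ} {p : (Fin n → Bool) → ℝ} (hp : IsDist p) {η σ : ℝ} (hη : 0 < η)
    (hη1 : η ≤ 1) (h0 : 0 < σ) (h1 : σ ≤ 1) (hn : 5 ≤ σ * n) :
    ∑ S : Finset (Fin n) with ¬ (S.card : ℝ) < σ * n / 2,
        σ ^ S.card * (1 - σ) ^ (n - S.card) * dTVU (projDist p S)
      ≤ η + (-Real.log η + 1) * (2 / σ) *
        ∑ S : Finset (Fin n), σ ^ S.card * (1 - σ) ^ (n - S.card) *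
          ∑ x : Fin n → Bool, p x * l2norm (meanVec (restrictDist p S x)) := by
  have hσ : 0 ≤ 1 - σ := by linarith
  have hlog : 0 ≤ -Real.log η := neg_nonneg.2 (Real.log_nonpos hη.le hη1)
  have hA : ∀ S : Finset (Fin n),
      0 ≤ ∑ x : Fin n → Bool, p x * l2norm (meanVec (restrictDist p S x)) := fun S =>
    Finset.sum_nonneg fun x _ => mul_nonneg (hp.1 x) (Real.sqrt_nonneg _)
  have hR : η + (-Real.log η + 1) * (2 / σ) *
        ∑ S : Finset (Fin n), σ ^ S.card * (1 - σ) ^ (n - S.card) *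
          ∑ x : Fin n → Bool, p x * l2norm (meanVec (restrictDist p S x))
      = ∑ S : Finset (Fin n), σ ^ S.card * (1 - σ) ^ (n - S.card) *
        (η + (-Real.log η + 1) *
          (2 / σ * ∑ x : Fin n → Bool, p x * l2norm (meanVec (restrictDist p S x)))) := by
    have hw : ∑ S : Finset (Fin n), σ ^ S.card * (1 - σ) ^ (n - S.card) = 1 := by
      rw [sum_weight]; simp
    have e : η = ∑ S : Finset (Fin n), σ ^ S.card * (1 - σ) ^ (n - S.card) * η := by
      rw [← Finset.sum_mul, hw, one_mul]
    conv_lhs => rw [e]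
    rw [Finset.mul_sum, ← Finset.sum_add_distrib, ← e]
    exact Finset.sum_congr rfl fun S _ => by ring
  rw [hR, Finset.sum_filter, sum_by_card, sum_by_card]
  refine Finset.sum_le_sum fun s hs => ?_
  have hsn : s ≤ n := by have := Finset.mem_range.1 hs; omega
  have hcard : ∀ S ∈ (Finset.univ : Finset (Fin n)).powersetCard s, S.card = s :=
    fun S hS => (Finset.mem_powersetCard.1 hS).2
  by_cases hlt : (s:ℝ) < σ * n / 2
  · rw [Finset.sum_eq_zero]
    · refine Finset.sum_nonneg fun S _ => ?_
      have := hA S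
      positivity
    · intro S hS
      rw [hcard S hS, if_neg (not_not.2 hlt)]
  · have hsr : σ * n / 2 ≤ s := not_lt.1 hlt
    have hs0 : (0:ℝ) < s := by linarith
    have hs1 : 1 ≤ s := by exact_mod_cast hs0
    calc _ = σ ^ s * (1 - σ) ^ (n - s) *
          ∑ S ∈ (Finset.univ : Finset (Fin n)).powersetCard s, dTVU (projDist p S) := by
          rw [Finset.mul_sum]
          refine Finset.sum_congr rfl fun S hS => ?_
          rw [hcard S hS, if_pos hlt]
      _ ≤ σ ^ s * (1 - σ) ^ (n - s) *
          ∑ S ∈ (Finset.univ : Finset (Fin n)).powersetCard s, (η + (-Real.log η + 1) *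
            (n / s * ∑ x, p x * l2norm (meanVec (restrictDist p S x)))) :=
          mul_le_mul_of_nonneg_left (level_bound hp hη hη1 hs1 hsn) (by positivity)
      _ ≤ _ := by
          rw [Finset.mul_sum]
          refine Finset.sum_le_sum fun S hS => ?_
          rw [hcard S hS]
          have hns : (n:ℝ) / s ≤ 2 / σ := by
            rw [div_le_div_iff₀ hs0 h0]; linarith
          have := hA S
          gcongr

/-- Main restriction theorem, explicit form: there is an absolute `c > 0` such
that for every `n ≥ 2`, `σ ∈ [0,1]` with `5 ≤ σn ≤ n−5`, every distribution `p` on `{-1,1}^n`,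
and `γ = E_{S∼S_σ}[d_TV(p_{S̄},U)] − 2·e^{−min(σ,1−σ)·n/10}` with `0 < γ ≤ 1/2`:
`E_{ρ∼D_σ(p)}[‖μ(p_{|ρ})‖₂] ≥ c·σ·γ/((log n)²·log(n/γ)·log(1/γ))`. -/
theorem stmt6 : ∃ c > (0:ℝ), ∀ n : ℕ, 2 ≤ n → ∀ σ : ℝ, 0 ≤ σ → σ ≤ 1 →
    5 ≤ σ * n → σ * n ≤ (n:ℝ) - 5 →
    ∀ p : (Fin n → Bool) → ℝ, IsDist p → ∀ γ : ℝ,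
    γ = (∑ S : Finset (Fin n), σ ^ S.card * (1 - σ) ^ (n - S.card) * dTVU (projDist p S))
        - 2 * Real.exp (-(min σ (1 - σ) * n / 10)) →
    0 < γ → γ ≤ 1/2 →
    c * σ * γ / ((Real.log n) ^ 2 * Real.log (n / γ) * Real.log (1 / γ))
      ≤ ∑ S : Finset (Fin n), σ ^ S.card * (1 - σ) ^ (n - S.card) *
          ∑ x : Fin n → Bool, p x * l2norm (meanVec (restrictDist p S x)) := by
  refine ⟨1 / 16, by norm_num, ?_⟩
  intro n _ σ hσ0 hσ1 hn5 hn5' p hp γ hγ hγ0 hγ1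
  have hσ : 0 < σ := by
    rcases hσ0.eq_or_lt with h | h
    · rw [← h] at hn5; norm_num at hn5
    · exact h
  have hn : (10:ℝ) ≤ n := by linarith
  set A := ∑ S : Finset (Fin n), σ ^ S.card * (1 - σ) ^ (n - S.card) *
          ∑ x : Fin n → Bool, p x * l2norm (meanVec (restrictDist p S x)) with hA
  have hgood := good_bound hp (half_pos hγ0) (by linarith) hσ hσ1 hn5
  rw [← hA] at hgood
  have hbad : ∑ S : Finset (Fin n) with (S.card : ℝ) < σ * n / 2,
      σ ^ S.card * (1 - σ) ^ (n - S.card) * dTVU (projDist p S)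
      ≤ Real.exp (-(min σ (1 - σ) * n / 10)) := by
    have hσ' : 0 ≤ 1 - σ := by linarith
    refine le_trans (Finset.sum_le_sum fun S _ => ?_) ((chernoff hσ0 hσ1).trans ?_)
    · exact mul_le_of_le_one_right (by positivity) (dTVU_le_one (projDist_isDist hp S))
    · refine Real.exp_le_exp.2 ?_
      have : min σ (1 - σ) * n ≤ σ * n :=
        mul_le_mul_of_nonneg_right (min_le_left _ _) (by linarith)
      linarith
  have hsplit := Finset.sum_filter_add_sum_filter_not (Finset.univ : Finset (Finset (Fin n)))
    (fun S => (S.card : ℝ) < σ * n / 2)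
    (fun S => σ ^ S.card * (1 - σ) ^ (n - S.card) * dTVU (projDist p S))
  have hmain : γ / 2 ≤ (-Real.log (γ / 2) + 1) * (2 / σ) * A := by
    have := Real.exp_pos (-(min σ (1 - σ) * n / 10))
    linarith
  set l := Real.log (1 / γ) with hl
  have hl2 : Real.log 2 ≤ l := by
    refine Real.log_le_log (by norm_num) ?_
    rw [le_div_iff₀ hγ0]; linarith
  have hlog2 := Real.log_two_gt_d9
  have hl0 : 0 < l := by linarith
  have hA0 : 0 ≤ A := by
    have hσ' : 0 ≤ 1 - σ := by linarith
    refine Finset.sum_nonneg fun S _ => mul_nonneg (by positivity) ?_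
    exact Finset.sum_nonneg fun x _ => mul_nonneg (hp.1 x) (Real.sqrt_nonneg _)
  have hK : -Real.log (γ / 2) + 1 ≤ 4 * l := by
    have : -Real.log (γ / 2) = l + Real.log 2 := by
      rw [hl, Real.log_div hγ0.ne' (by norm_num), one_div, Real.log_inv]; ring
    linarith
  have hfin : 1 / 16 * σ * γ ≤ A * l := by
    have h1 : γ / 2 ≤ 4 * l * (2 / σ) * A :=
      hmain.trans (by gcongr)
    have h2 : 4 * l * (2 / σ) * A = 8 * (A * l) / σ := by ring
    rw [h2, le_div_iff₀ hσ] at h1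
    linarith
  have hexp : Real.exp 1 ≤ 10 := by linarith [Real.exp_one_lt_d9]
  have hlogn : 1 ≤ Real.log n := by
    rw [Real.le_log_iff_exp_le (by linarith)]; linarith
  have hlogn' : 1 ≤ Real.log (n / γ) := by
    refine hlogn.trans (Real.log_le_log (by linarith) ?_)
    rw [le_div_iff₀ hγ0]
    nlinarith
  have hden : l ≤ Real.log n ^ 2 * Real.log (n / γ) * l := by
    have h1 : 1 ≤ Real.log n ^ 2 := one_le_pow₀ hlogn
    have h2 : 1 ≤ Real.log n ^ 2 * Real.log (n / γ) := one_le_mul_of_one_le_of_one_le h1 hlogn'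
    nlinarith
  rw [div_le_iff₀ (hl0.trans_le hden)]
  exact hfin.trans (mul_le_mul_of_nonneg_left hden hA0)

end Subcube
end
end
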